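/- For each integer i > 0, let D(i) denote the limit inferior as n → ∞ of d(Wₙ, αₙ), where αₙ is the subword of W of length |Wₙ| beginning at position i. Then the infimum of D(i) over all integers i > 0 equals 2/9, and this infimum is not attained (D(i) > 2/9 for every i > 0). -/

import Mathlib

open Filter

/-- The Chacón words: `W₀ = 0`, `W_{n+1} = Wₙ Wₙ 1 Wₙ`. -/
def chaconWord : ℕ → List (Fin 2)
  | 0 => [0]
  | n + 1 => chaconWord n ++ chaconWord n ++ [1] ++ chaconWord n

/-- `W` is the infinite word having every `Wₙ` as an initial segment. -/
def IsChaconInfWord (W : ℕ → Fin 2) : Prop :=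
  ∀ n i, i < (chaconWord n).length → W i = (chaconWord n).getD i 0

/-- A finite word `α` occurs in a finite word `β` at position `j`. -/
def OccursAt (α β : List (Fin 2)) (j : ℕ) : Prop :=
  j + α.length ≤ β.length ∧ ∀ k < α.length, β.getD (j + k) 0 = α.getD k 0

/-- A finite word `α` occurs in the infinite word `W` at position `j`. -/
def OccursAtInf (W : ℕ → Fin 2) (α : List (Fin 2)) (j : ℕ) : Prop :=
  ∀ k < α.length, W (j + k) = α.getD k 0

/-- The subword of the infinite word `W` of length `L` beginning at position `i`. -/
def subword (W : ℕ → Fin 2) (i L : ℕ) : List (Fin 2) :=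
  (List.range L).map fun k => W (i + k)

/-- The (normalized) Hamming distance `d` of two finite words. -/
noncomputable def hamming (α β : List (Fin 2)) : ℝ :=
  (((Finset.range α.length).filter fun i => α.getD i 0 ≠ β.getD i 0).card : ℝ) / α.length

/-- The modified 0-Hamming distance `d₀` of two finite words. -/
noncomputable def hamming0 (α β : List (Fin 2)) : ℝ :=
  (((Finset.range α.length).filter fun i => α.getD i 0 = 0 ∧ β.getD i 0 = 1).card : ℝ) /
    (((Finset.range α.length).filter fun i => α.getD i 0 = 0).card : ℝ)

/-- Lengths of the Chacon words. -/
def hh : ℕ → ℕ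
  | 0 => 1
  | n + 1 => 3 * hh n + 1

theorem hh_eq (n : ℕ) : 2 * hh n + 1 = 3 ^ (n + 1) := by
  induction n with
  | zero => rfl
  | succ n ih => rw [pow_succ, ← ih, hh]; ring

theorem hh_pos (n : ℕ) : 0 < hh n := by
  cases n <;> simp [hh]

theorem length_chacon (n : ℕ) : (chaconWord n).length = hh n := by
  induction n with
  | zero => rfl
  | succ n ih => simp [chaconWord, hh, ih]; ring

theorem hh_gt (n : ℕ) : n < hh n := by
  induction n with
  | zero => simp [hh]
  | succ n ih => simp only [hh]; omega

/-- Structural description of the infinite word. -/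
structure WS (W : ℕ → Fin 2) : Prop where
  zero : W 0 = 0
  b1 : ∀ n k, k < hh n → W (hh n + k) = W k
  one : ∀ n, W (2 * hh n) = 1
  b2 : ∀ n k, k < hh n → W (2 * hh n + 1 + k) = W k

theorem ws_of (W : ℕ → Fin 2) (hW : IsChaconInfWord W) : WS W := by
  have key : ∀ n k, k < hh n → W k = (chaconWord n).getD k 0 := by
    intro n k hk; exact hW n k (by rwa [length_chacon])
  refine ⟨?_, ?_, ?_, ?_⟩
  · rw [key 0 0 (by simp [hh])]; rfl
  · intro n k hk
    rw [key (n+1) _ (by simp only [hh]; omega), key n k hk]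
    have hl := length_chacon n
    simp only [chaconWord, List.append_assoc]
    rw [List.getD_append_right _ _ _ _ (by omega), List.getD_append _ _ _ _ (by omega)]
    congr 1; omega
  · intro n
    rw [key (n+1) _ (by simp only [hh]; omega)]
    have hl := length_chacon n
    simp only [chaconWord, List.append_assoc]
    rw [List.getD_append_right _ _ _ _ (by omega), List.getD_append_right _ _ _ _ (by omega)]
    have : 2 * hh n - (chaconWord n).length - (chaconWord n).length = 0 := by omega
    rw [this]; rfl
  · intro n k hk
    rw [key (n+1) _ (by simp only [hh]; omega), key n k hk]
    have hl := length_chacon n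
    simp only [chaconWord, List.append_assoc]
    rw [List.getD_append_right _ _ _ _ (by omega), List.getD_append_right _ _ _ _ (by omega),
      List.getD_append_right _ _ _ _ (by simp; omega)]
    congr 1; simp; omega

/-- The word `W_n` occurs in `V` at position `p`. -/
def Blk (W V : ℕ → Fin 2) (n p : ℕ) : Prop := ∀ k < hh n, V (p + k) = W k

/-- Number of `0`-versus-`1` mismatches of `W_n` against `V` at position `x`. -/
def ZZ (W V : ℕ → Fin 2) (L x : ℕ) : ℕ :=
  ∑ k ∈ Finset.range L, if W k = 0 ∧ V (x + k) = 1 then 1 else 0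

theorem Blk.split {W V : ℕ → Fin 2} (hS : WS W) {n p : ℕ} (h : Blk W V (n+1) p) :
    Blk W V n p ∧ Blk W V n (p + hh n) ∧ V (p + 2 * hh n) = 1 ∧ Blk W V n (p + 2 * hh n + 1) := by
  refine ⟨?_, ?_, ?_, ?_⟩
  · intro k hk
    exact h k (by simp only [hh]; omega)
  · intro k hk
    rw [add_assoc, h _ (by simp only [hh]; omega), hS.b1 n k hk]
  · rw [h _ (by simp only [hh]; omega), hS.one]
  · intro k hk
    have : p + 2 * hh n + 1 + k = p + (2 * hh n + 1 + k) := by ring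
    rw [this, h _ (by simp only [hh]; omega), hS.b2 n k hk]

theorem ZZ_succ {W : ℕ → Fin 2} (hS : WS W) (V : ℕ → Fin 2) (n x : ℕ) :
    ZZ W V (hh (n+1)) x = ZZ W V (hh n) x + ZZ W V (hh n) (x + hh n)
      + ZZ W V (hh n) (x + 2 * hh n + 1) := by
  have e : hh (n+1) = hh n + hh n + 1 + hh n := by simp only [hh]; ring
  unfold ZZ
  rw [e, Finset.sum_range_add, Finset.sum_range_add, Finset.sum_range_add]
  have o := hS.one n
  rw [two_mul] at o
  simp only [Finset.sum_range_one, add_zero, o]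
  simp only [one_ne_zero, false_and, if_false, add_zero]
  congr 1
  · congr 1
    apply Finset.sum_congr rfl
    intro k hk
    rw [hS.b1 n k (by simpa using hk), add_assoc]
  · apply Finset.sum_congr rfl
    intro k hk
    have := hS.b2 n k (by simpa using hk)
    rw [two_mul] at this
    rw [this]
    have : x + (hh n + hh n + 1 + k) = x + 2 * hh n + 1 + k := by ring
    rw [this]

theorem W_last {W : ℕ → Fin 2} (hS : WS W) (n : ℕ) : W (hh n - 1) = 0 := by
  induction n with
  | zero => exact hS.zero
  | succ n ih =>
    have hp := hh_pos n
    have := hS.b2 n (hh n - 1) (by omega)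
    rw [ih] at this
    rw [← this]
    congr 1
    simp only [hh]; omega

theorem ZZ_aligned {W V : ℕ → Fin 2} {n p : ℕ} (h : Blk W V n p) : ZZ W V (hh n) p = 0 := by
  unfold ZZ
  apply Finset.sum_eq_zero
  intro k hk
  rw [h k (by simpa using hk)]
  split_ifs with hc
  · rw [hc.1] at hc; exact absurd hc.2 (by decide)
  · rfl

theorem ZZ_plus {W V : ℕ → Fin 2} (hS : WS W) {n p : ℕ} (h : Blk W V n p) :
    2 * ZZ W V (hh n) (p + 1) + 1 = 3 ^ n + 2 * (V (p + hh n)).val := by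
  induction n generalizing p with
  | zero =>
    simp only [ZZ, hh, Finset.sum_range_one, hS.zero, add_zero, true_and]
    generalize V (p + 1) = v
    revert v; decide
  | succ n ih =>
    obtain ⟨a, b, c, d⟩ := h.split hS
    have ha := ih a
    have hb := ih b
    have hd := ih d
    have v1 : V (p + hh n) = 0 := by
      have := b 0 (hh_pos n); rw [hS.zero] at this; simpa using this
    have v2 : V (p + hh n + hh n) = 1 := by rw [← c]; congr 1; ring
    have v3 : p + hh (n+1) = p + 2 * hh n + 1 + hh n := by simp only [hh]; ring
    rw [ZZ_succ hS, v3, pow_succ]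
    rw [v1] at ha; rw [v2] at hb
    have e1 : p + 1 + hh n = p + hh n + 1 := by ring
    have e2 : p + 1 + 2 * hh n + 1 = p + 2 * hh n + 1 + 1 := by ring
    rw [e1, e2]
    simp only [Fin.val_zero, Fin.val_one] at ha hb
    omega

theorem ZZ_minus {W V : ℕ → Fin 2} (hS : WS W) {n p : ℕ} (h : Blk W V n (p + 1)) :
    2 * ZZ W V (hh n) p + 1 = 3 ^ n + 2 * (V p).val := by
  induction n generalizing p with
  | zero =>
    simp only [ZZ, hh, Finset.sum_range_one, hS.zero, add_zero, true_and]
    generalize V p = v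
    revert v; decide
  | succ n ih =>
    obtain ⟨a, b, c, d⟩ := h.split hS
    have e1 : p + 1 + hh n = p + hh n + 1 := by ring
    have e2 : p + 1 + 2 * hh n + 1 = p + 2 * hh n + 1 + 1 := by ring
    rw [e1] at b
    rw [e2] at d
    have ha := ih a
    have hb := ih b
    have hd := ih d
    have hp := hh_pos n
    have v1 : V (p + hh n) = 0 := by
      have := a (hh n - 1) (by omega)
      rw [W_last hS] at this; rw [← this]; congr 1; omega
    have v2 : V (p + 2 * hh n + 1) = 1 := by rw [← c]; congr 1; ring
    rw [ZZ_succ hS, pow_succ]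
    rw [v1] at hb; rw [v2] at hd
    simp only [Fin.val_zero, Fin.val_one] at hb hd
    omega

/-- `W_n 1^s W_n` occurs in `V` at `p`. -/
structure Gap (W V : ℕ → Fin 2) (n p s : ℕ) : Prop where
  hs : s = 0 ∨ s = 1
  l : Blk W V n p
  m : s = 1 → V (p + hh n) = 1
  r : Blk W V n (p + hh n + s)

theorem Gap.split {W V : ℕ → Fin 2} (hS : WS W) {n p s : ℕ} (h : Gap W V (n+1) p s) :
    Gap W V n p 0 ∧ Gap W V n (p + hh n) 1 ∧ Gap W V n (p + 2 * hh n + 1) s ∧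
    Gap W V n (p + 3 * hh n + 1 + s) 0 ∧ Gap W V n (p + 4 * hh n + 1 + s) 1 := by
  obtain ⟨a, b, c, d⟩ := h.l.split hS
  obtain ⟨a', b', c', d'⟩ := h.r.split hS
  have e : p + hh (n+1) + s = p + 3 * hh n + 1 + s := by simp only [hh]; ring
  rw [e] at a' b' c' d'
  refine ⟨⟨Or.inl rfl, a, by simp, b⟩, ⟨Or.inr rfl, b, fun _ => ?_, ?_⟩,
    ⟨h.hs, d, fun hs => ?_, ?_⟩, ⟨Or.inl rfl, a', by simp, b'⟩, ⟨Or.inr rfl, ?_, fun _ => ?_, ?_⟩⟩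
  · rw [← c]; congr 1; ring
  · convert d using 1; ring
  · rw [← h.m hs]; congr 1; simp only [hh]; ring
  · convert a' using 1; ring
  · convert b' using 1; ring
  · rw [← c']; congr 1; ring
  · convert d' using 1; ring

theorem Gap.plus {W V : ℕ → Fin 2} (hS : WS W) {n p : ℕ} (h : Gap W V n p 1) :
    2 * ZZ W V (hh n) (p + 1) = 3 ^ n + 1 := by
  have := ZZ_plus hS h.l
  rw [h.m rfl] at this
  simp only [Fin.val_one] at this
  omega

theorem Gap.minus {W V : ℕ → Fin 2} (hS : WS W) {n p : ℕ} (h : Gap W V n p 1) :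
    2 * ZZ W V (hh n) (p + hh n) = 3 ^ n + 1 := by
  have := ZZ_minus hS h.r
  rw [h.m rfl] at this
  simp only [Fin.val_one] at this
  omega

theorem main_low {W V : ℕ → Fin 2} (hS : WS W) {n p s i : ℕ} (h : Gap W V n p s)
    (h1 : p < i) (h2 : i < p + hh n + s) : 3 ^ n < 6 * ZZ W V (hh n) i := by
  induction n generalizing p s i with
  | zero =>
    have hs := h.hs
    simp only [hh] at h2
    obtain rfl : s = 1 := by omega
    obtain rfl : i = p + 1 := by omega
    have := h.plus hS
    simp only [pow_zero] at this ⊢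
    omega
  | succ n ih =>
    obtain ⟨g0, g1, g2, g3, g4⟩ := h.split hS
    have hs := h.hs
    have hp := hh_pos n
    rw [ZZ_succ hS, pow_succ]
    simp only [hh] at h2
    by_cases c1 : i = p + hh n
    · have := g1.minus hS
      rw [← c1] at this; omega
    by_cases c2 : i = p + hh n + 1
    · have := g1.plus hS
      rw [← c2] at this; omega
    by_cases c3 : i = p + 2 * hh n
    · have := g1.minus hS
      rw [show p + hh n + hh n = i by omega] at this; omega
    by_cases c4 : i = p + 2 * hh n + 1
    · rcases hs with rfl | rfl
      · have := g4.plus hS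
        rw [show p + 4 * hh n + 1 + 0 + 1 = i + 2 * hh n + 1 by omega] at this; omega
      · have := g2.minus hS
        rw [show p + 2 * hh n + 1 + hh n = i + hh n by omega] at this; omega
    by_cases c5 : s = 1 ∧ i = p + 2 * hh n + 2
    · obtain ⟨rfl, c5⟩ := c5
      have := g2.plus hS
      rw [show p + 2 * hh n + 1 + 1 = i by omega] at this; omega
    have loc : ∀ x, p < x → x < p + 5 * hh n + 2 + s → x ≠ p + hh n → x ≠ p + 2 * hh n + 1 →
        x ≠ p + 3 * hh n + 1 + s → x ≠ p + 4 * hh n + 1 + s → 3 ^ n < 6 * ZZ W V (hh n) x := by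
      intro x y1 y2 y3 y4 y5 y6
      by_cases z1 : x < p + hh n
      · exact ih g0 (by omega) (by omega)
      by_cases z2 : x < p + 2 * hh n + 1
      · exact ih g1 (by omega) (by omega)
      by_cases z3 : x < p + 3 * hh n + 1 + s
      · exact ih g2 (by omega) (by omega)
      by_cases z4 : x < p + 4 * hh n + 1 + s
      · exact ih g3 (by omega) (by omega)
      · exact ih g4 (by omega) (by omega)
    have l1 := loc i (by omega) (by omega) (by omega) (by omega) (by omega) (by omega)
    have l2 := loc (i + hh n) (by omega) (by omega) (by omega) (by omega) (by omega) (by omega)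
    have l3 := loc (i + 2 * hh n + 1) (by omega) (by omega) (by omega) (by omega) (by omega)
      (by omega)
    omega

theorem low_iter {W V : ℕ → Fin 2} (hS : WS W) {n i : ℕ} (h1 : 0 < i) (h2 : i < hh n) (k : ℕ)
    {p s : ℕ} (h : Gap W V (n + k) p s) :
    3 ^ k * (3 ^ n + 1) ≤ 6 * ZZ W V (hh (n + k)) (p + i) := by
  induction k generalizing p s with
  | zero =>
    have := main_low hS h (i := p + i) (by omega) (by simp only [add_zero]; omega)
    simp only [add_zero, pow_zero, one_mul] at *
    omega
  | succ k ih =>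
    obtain ⟨g0, g1, g2, -, -⟩ := Gap.split hS (n := n + k) h
    have a := ih g0
    have b := ih g1
    have c := ih g2
    rw [show n + (k + 1) = n + k + 1 by ring, ZZ_succ hS, pow_succ]
    rw [show p + i + hh (n+k) = p + hh (n+k) + i by ring,
      show p + i + 2 * hh (n+k) + 1 = p + 2 * hh (n+k) + 1 + i by ring]
    nlinarith

theorem up_iter {W V : ℕ → Fin 2} (hS : WS W) (m k : ℕ)
    {p s : ℕ} (h : Gap W V (m + 1 + k) p s) :
    2 * ZZ W V (hh (m + 1 + k)) (p + (2 * hh m + 1)) = 3 ^ k * (3 ^ m + 1) := by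
  induction k generalizing p s with
  | zero =>
    obtain ⟨g0, g1, g2, g3, g4⟩ := Gap.split hS (n := m) h
    simp only [add_zero, pow_zero, one_mul]
    rw [ZZ_succ hS]
    have a : ZZ W V (hh m) (p + (2 * hh m + 1)) = 0 := ZZ_aligned g2.l
    rw [a]
    rcases h.hs with rfl | rfl
    · have b : ZZ W V (hh m) (p + (2 * hh m + 1) + hh m) = 0 := by
        apply ZZ_aligned
        convert g3.l using 1; ring
      rw [b]
      have := g4.plus hS
      rw [← this]
      rw [show p + (2 * hh m + 1) + 2 * hh m + 1 = p + 4 * hh m + 1 + 0 + 1 by ring]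
      ring
    · have b : ZZ W V (hh m) (p + (2 * hh m + 1) + 2 * hh m + 1) = 0 := by
        apply ZZ_aligned
        convert g4.l using 1; ring
      rw [b]
      have := g2.minus hS
      rw [← this]
      rw [show p + (2 * hh m + 1) + hh m = p + 2 * hh m + 1 + hh m by ring]
      ring
  | succ k ih =>
    obtain ⟨g0, g1, g2, -, -⟩ := Gap.split hS (n := m + 1 + k) h
    have a := ih g0
    have b := ih g1
    have c := ih g2
    rw [show m + 1 + (k + 1) = m + 1 + k + 1 by ring, ZZ_succ hS, pow_succ]
    rw [show p + (2 * hh m + 1) + hh (m+1+k) = p + hh (m+1+k) + (2 * hh m + 1) by ring,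
      show p + (2 * hh m + 1) + 2 * hh (m+1+k) + 1
        = p + 2 * hh (m+1+k) + 1 + (2 * hh m + 1) by ring]
    linarith

theorem gap_W {W : ℕ → Fin 2} (hS : WS W) (n : ℕ) : Gap W W n 0 0 := by
  refine ⟨Or.inl rfl, fun k _ => by simp, by simp, fun k hk => ?_⟩
  have := hS.b1 n k hk
  simpa using this

/-- number of mismatches -/
def MM (W : ℕ → Fin 2) (L i : ℕ) : ℕ :=
  ∑ k ∈ Finset.range L, if W k ≠ W (i + k) then 1 else 0

theorem MM_ZZ (W : ℕ → Fin 2) (L i : ℕ) :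
    2 * ZZ W W L i ≤ MM W L i + i ∧ MM W L i ≤ 2 * ZZ W W L i + i := by
  have key : MM W L i + ∑ k ∈ Finset.range L, (W (i + k)).val
      = 2 * ZZ W W L i + ∑ k ∈ Finset.range L, (W k).val := by
    unfold MM ZZ
    rw [Finset.mul_sum, ← Finset.sum_add_distrib, ← Finset.sum_add_distrib]
    apply Finset.sum_congr rfl
    intro k _
    generalize W (i + k) = v
    generalize W k = w
    revert v w; decide
  have e1 := Finset.sum_range_add (fun k => (W k).val) i L
  have e2 := Finset.sum_range_add (fun k => (W k).val) L i
  rw [add_comm L i] at e2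
  have bd : ∀ g : ℕ → Fin 2, ∑ k ∈ Finset.range i, (g k).val ≤ i := by
    intro g
    calc _ ≤ ∑ k ∈ Finset.range i, 1 := Finset.sum_le_sum (fun k _ => by omega)
      _ = i := by simp
  have b1 := bd W
  have b2 := bd (fun k => W (L + k))
  omega

theorem hamming_eq (W : ℕ → Fin 2) (hW : IsChaconInfWord W) (n i : ℕ) :
    hamming (chaconWord n) (subword W i (chaconWord n).length) = (MM W (hh n) i : ℝ) / hh n := by
  unfold hamming
  rw [Finset.card_filter, length_chacon]
  congr 2
  unfold MM
  apply Finset.sum_congr rfl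
  intro k hk
  have hk' : k < hh n := by simpa using hk
  rw [← hW n k (by rwa [length_chacon])]
  have : (subword W i (hh n)).getD k 0 = W (i + k) := by
    simp [subword, List.getD, hk']
  rw [this]

theorem MM_le (W : ℕ → Fin 2) (L i : ℕ) : MM W L i ≤ L := by
  unfold MM
  calc _ ≤ ∑ k ∈ Finset.range L, 1 := Finset.sum_le_sum (fun k _ => by split_ifs <;> simp)
    _ = L := by simp

theorem ham_nonneg (α β : List (Fin 2)) : 0 ≤ hamming α β := by
  unfold hamming; positivity

theorem low_bound (W : ℕ → Fin 2) (hW : IsChaconInfWord W) (i : ℕ) (hi : 0 < i) :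
    Filter.liminf
      (fun n => hamming (chaconWord n) (subword W i (chaconWord n).length)) atTop > 2 / 9 := by
  have hS := ws_of W hW
  have hin : i < hh i := hh_gt i
  have h3 : (0:ℝ) < 3 ^ i := by positivity
  have step : 2 / 9 + 1 / (9 * 3 ^ i) ≤ Filter.liminf
      (fun n => hamming (chaconWord n) (subword W i (chaconWord n).length)) atTop := by
    apply Filter.le_liminf_of_le
    · apply Filter.IsBoundedUnder.isCoboundedUnder_ge
      refine ⟨1, ?_⟩
      simp only [eventually_map]
      refine Filter.Eventually.of_forall fun n => ?_
      rw [hamming_eq W hW]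
      apply div_le_one_of_le₀ (by exact_mod_cast MM_le W _ _) (by positivity)
    · filter_upwards [eventually_ge_atTop (i + 6 * i)] with N hN
      obtain ⟨k, rfl⟩ := Nat.exists_eq_add_of_le (show i ≤ N by omega)
      rw [hamming_eq W hW]
      have hpos : (0:ℝ) < hh (i + k) := by exact_mod_cast hh_pos _
      rw [le_div_iff₀ hpos]
      have a := low_iter hS hi hin k (gap_W hS (i + k))
      rw [zero_add] at a
      have b := (MM_ZZ W (hh (i + k)) i).1
      have c := hh_eq (i + k)
      have d : 6 * i ≤ 3 ^ k :=
        le_trans (show _ ≤ k by omega) (Nat.lt_pow_self (n := k) (a := 3) (by norm_num)).le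
      rw [pow_succ, pow_add] at c
      have a' : (3:ℝ) ^ k * (3 ^ i + 1) ≤ 6 * ZZ W W (hh (i + k)) i := by exact_mod_cast a
      have b' : (2:ℝ) * ZZ W W (hh (i + k)) i ≤ MM W (hh (i + k)) i + i := by exact_mod_cast b
      have c' : (2:ℝ) * hh (i + k) + 1 = 3 ^ i * 3 ^ k * 3 := by exact_mod_cast c
      have d' : (6:ℝ) * i ≤ 3 ^ k := by exact_mod_cast d
      have hle : (hh (i + k) : ℝ) ≤ 3 ^ i * 3 ^ k * 3 / 2 := by linarith
      calc (2 / 9 + 1 / (9 * 3 ^ i)) * (hh (i + k) : ℝ)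
          ≤ (2 / 9 + 1 / (9 * 3 ^ i)) * (3 ^ i * 3 ^ k * 3 / 2) := by gcongr
        _ = 3 ^ k * 3 ^ i / 3 + 3 ^ k / 6 := by field_simp; ring
        _ ≤ MM W (hh (i + k)) i := by nlinarith
  have : (0:ℝ) < 1 / (9 * 3 ^ i) := by positivity
  linarith

theorem up_bound (W : ℕ → Fin 2) (hW : IsChaconInfWord W) (m : ℕ) :
    Filter.liminf
      (fun n => hamming (chaconWord n) (subword W (2 * hh m + 1) (chaconWord n).length)) atTop
      ≤ 2 / 9 + 1 / 3 ^ m := by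
  have hS := ws_of W hW
  have h3 : (0:ℝ) < 3 ^ m := by positivity
  set i := 2 * hh m + 1 with hi
  apply Filter.liminf_le_of_le
  · refine ⟨0, ?_⟩
    simp only [eventually_map]
    exact Filter.Eventually.of_forall fun n => ham_nonneg _ _
  intro b hb
  obtain ⟨N, hN, hge⟩ := (hb.and (eventually_ge_atTop (m + 1 + (i + 1)))).exists
  obtain ⟨k, rfl⟩ := Nat.exists_eq_add_of_le (show m + 1 ≤ N by omega)
  refine le_trans hN ?_
  rw [hamming_eq W hW]
  have hpos : (0:ℝ) < hh (m + 1 + k) := by exact_mod_cast hh_pos _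
  rw [div_le_iff₀ hpos]
  have a := up_iter hS m k (gap_W hS (m + 1 + k))
  rw [zero_add] at a
  have b := (MM_ZZ W (hh (m + 1 + k)) i).2
  have c := hh_eq (m + 1 + k)
  have d : i + 1 ≤ 3 ^ k :=
    le_trans (show _ ≤ k by omega) (Nat.lt_pow_self (n := k) (a := 3) (by norm_num)).le
  rw [pow_succ, pow_add, pow_succ] at c
  have a' : 2 * (ZZ W W (hh (m + 1 + k)) i : ℝ) = 3 ^ k * (3 ^ m + 1) := by exact_mod_cast a
  have b' : (MM W (hh (m + 1 + k)) i : ℝ) ≤ 2 * ZZ W W (hh (m + 1 + k)) i + i := by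
    exact_mod_cast b
  have c' : (2:ℝ) * hh (m + 1 + k) + 1 = 3 ^ m * 3 * 3 ^ k * 3 := by exact_mod_cast c
  have d' : (i:ℝ) + 1 ≤ 3 ^ k := by exact_mod_cast d
  have he : (hh (m + 1 + k) : ℝ) = (3 ^ m * 3 * 3 ^ k * 3 - 1) / 2 := by linarith
  have hm1 : (1:ℝ) / 3 ^ m ≤ 1 := by
    rw [div_le_one h3]; exact one_le_pow₀ (by norm_num)
  have : (2 / 9 + 1 / 3 ^ m) * (hh (m + 1 + k) : ℝ)
      = 3 ^ k * 3 ^ m + 9 / 2 * 3 ^ k - (2 / 9 + 1 / 3 ^ m) / 2 := by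
    rw [he]; field_simp; ring
  rw [this]
  nlinarith

theorem chacon_inf_liminf (W : ℕ → Fin 2) (hW : IsChaconInfWord W) :
    sInf {x : ℝ | ∃ i : ℕ, 0 < i ∧
        x = Filter.liminf
          (fun n => hamming (chaconWord n) (subword W i (chaconWord n).length)) atTop}
      = 2 / 9 ∧
    ∀ i : ℕ, 0 < i →
      Filter.liminf
          (fun n => hamming (chaconWord n) (subword W i (chaconWord n).length)) atTop
        > 2 / 9 := by
  refine ⟨le_antisymm ?_ ?_, fun i hi => low_bound W hW i hi⟩
  · apply le_of_forall_pos_le_add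
    intro ε hε
    obtain ⟨m, hm⟩ := exists_pow_lt_of_lt_one hε (show (1/3:ℝ) < 1 by norm_num)
    have hu := up_bound W hW m
    have : (1/3:ℝ) ^ m = 1 / 3 ^ m := by rw [div_pow, one_pow]
    refine le_trans (csInf_le ⟨2/9, ?_⟩ ⟨2 * hh m + 1, by omega, rfl⟩) (by linarith)
    rintro x ⟨i, hi, rfl⟩
    exact (low_bound W hW i hi).le
  · apply le_csInf
    · exact ⟨_, 1, one_pos, rfl⟩
    · rintro x ⟨i, hi, rfl⟩
      exact (low_bound W hW i hi).le
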